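/- Let U ⊆ ℝⁿ be open and connected, let Γ be smooth Christoffel symbols on U, let h be a smooth metric on U, and let Ψ be a smooth closed 1-form on U with ∇h = h ⊗ Ψ. Then there exists a smooth positive function μ : U → ℝ such that μ⁻¹h is parallel on all of U (i.e. the connection is globally metric with a parallel metric conformal to h) if and only if Ψ is exact, i.e. there exists a smooth function f : U → ℝ with Ψₖ = ∂ₖf on U for all k. -/

import Mathlib

/-- The `k`-th partial derivative of a scalar function on `ℝⁿ`. -/
noncomputable def pd {n : ℕ} (f : (Fin n → ℝ) → ℝ) (k : Fin n) (x : Fin n → ℝ) : ℝ :=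
  fderiv ℝ f x (Pi.single k 1)

/-- The covariant derivative `(∇ₖ g)ᵢⱼ = ∂ₖ gᵢⱼ − Σₗ Γˡₖᵢ gₗⱼ − Σₗ Γˡₖⱼ gᵢₗ` of a
matrix-valued field `g` with respect to the Christoffel symbols `Γ` (written `Γ x l k i`). -/
noncomputable def covDeriv {n : ℕ} (Γ : (Fin n → ℝ) → Fin n → Fin n → Fin n → ℝ)
    (g : (Fin n → ℝ) → Matrix (Fin n) (Fin n) ℝ) (k i j : Fin n) (x : Fin n → ℝ) : ℝ :=
  pd (fun y => g y i j) k x - (∑ l, Γ x l k i * g x l j) - ∑ l, Γ x l k j * g x i l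

/-- A smooth metric on `U`: a smooth field of symmetric invertible matrices. -/
def SmoothMetricOn {n : ℕ} (h : (Fin n → ℝ) → Matrix (Fin n) (Fin n) ℝ)
    (U : Set (Fin n → ℝ)) : Prop :=
  (∀ i j, ContDiffOn ℝ (⊤ : ℕ∞) (fun x => h x i j) U) ∧
  ∀ x ∈ U, (h x).IsSymm ∧ IsUnit (h x)

/-- Smooth Christoffel symbols on `U`. -/
def SmoothChristoffelOn {n : ℕ} (Γ : (Fin n → ℝ) → Fin n → Fin n → Fin n → ℝ)
    (U : Set (Fin n → ℝ)) : Prop :=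
  ∀ l k i, ContDiffOn ℝ (⊤ : ℕ∞) (fun x => Γ x l k i) U


/-!
By the Leibniz rule, `∇h = h ⊗ Ψ` gives `∇(μ⁻¹h) = μ⁻¹h ⊗ (Ψ - d log μ)`. As `h` vanishes nowhere,
`μ⁻¹h` is parallel exactly when `Ψ = d log μ`, so `f = log μ` and `μ = exp f` translate between
conformal factors and primitives of `Ψ`.
-/

section PartialDerivatives

variable {n : ℕ} {f g : (Fin n → ℝ) → ℝ} {x : Fin n → ℝ}

theorem pd_mul (hf : DifferentiableAt ℝ f x) (hg : DifferentiableAt ℝ g x) (k : Fin n) :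
    pd (fun y => f y * g y) k x = f x * pd g k x + g x * pd f k x := by
  simp [pd, fderiv_fun_mul hf hg]

theorem pd_inv (hf : DifferentiableAt ℝ f x) (hx : f x ≠ 0) (k : Fin n) :
    pd (fun y => (f y)⁻¹) k x = -(f x ^ 2)⁻¹ * pd f k x := by
  have hinv : HasFDerivAt (fun y => (f y)⁻¹) (-(f x ^ 2)⁻¹ • fderiv ℝ f x) x :=
    (hasDerivAt_inv hx).comp_hasFDerivAt x hf.hasFDerivAt
  simp [pd, hinv.fderiv]

theorem pd_log (hf : DifferentiableAt ℝ f x) (hx : f x ≠ 0) (k : Fin n) :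
    pd (fun y => Real.log (f y)) k x = (f x)⁻¹ * pd f k x := by
  simp [pd, fderiv.log hf hx]

end PartialDerivatives

section CovariantDerivative

variable {n : ℕ} {Γ : (Fin n → ℝ) → Fin n → Fin n → Fin n → ℝ}
  {h : (Fin n → ℝ) → Matrix (Fin n) (Fin n) ℝ} {φ μ : (Fin n → ℝ) → ℝ} {x : Fin n → ℝ}
  {i j k : Fin n} {p : ℝ}

theorem covDeriv_smul (hφ : DifferentiableAt ℝ φ x)
    (hd : DifferentiableAt ℝ (fun y => h y i j) x) :
    covDeriv Γ (fun y => φ y • h y) k i j x = pd φ k x * h x i j + φ x * covDeriv Γ h k i j x := by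
  simp only [covDeriv, Matrix.smul_apply, smul_eq_mul, pd_mul hφ hd, mul_left_comm _ (φ x),
    ← Finset.mul_sum]
  ring

theorem covDeriv_inv_smul_of_recurrent (hμ : DifferentiableAt ℝ μ x) (hμx : μ x ≠ 0)
    (hd : DifferentiableAt ℝ (fun y => h y i j) x) (hrec : covDeriv Γ h k i j x = h x i j * p) :
    covDeriv Γ (fun y => (μ y)⁻¹ • h y) k i j x =
      (μ x)⁻¹ * h x i j * (p - pd (fun y => Real.log (μ y)) k x) := by
  rw [covDeriv_smul (hμ.fun_inv hμx) hd, hrec, pd_inv hμ hμx, pd_log hμ hμx]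
  ring

theorem covDeriv_inv_smul_eq_zero_iff (hμ : DifferentiableAt ℝ μ x) (hμx : μ x ≠ 0)
    (hd : ∀ i j, DifferentiableAt ℝ (fun y => h y i j) x) (hx : h x ≠ 0)
    (hrec : ∀ i j, covDeriv Γ h k i j x = h x i j * p) :
    (∀ i j, covDeriv Γ (fun y => (μ y)⁻¹ • h y) k i j x = 0) ↔
      p = pd (fun y => Real.log (μ y)) k x := by
  simp only [covDeriv_inv_smul_of_recurrent hμ hμx (hd _ _) (hrec _ _)]
  constructor
  · intro hpar
    obtain ⟨i, j, hij⟩ : ∃ i j, h x i j ≠ 0 := by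
      by_contra! hzero
      exact hx (Matrix.ext hzero)
    exact sub_eq_zero.1 ((mul_eq_zero.1 (hpar i j)).resolve_left
      (mul_ne_zero (inv_ne_zero hμx) hij))
  · intro hp i j
    rw [sub_eq_zero.2 hp, mul_zero]

end CovariantDerivative

theorem SmoothMetricOn.ne_zero {n : ℕ} {h : (Fin n → ℝ) → Matrix (Fin n) (Fin n) ℝ}
    {U : Set (Fin n → ℝ)} (hh : SmoothMetricOn h U) {x : Fin n → ℝ} (hx : x ∈ U) (hn : 0 < n) :
    h x ≠ 0 :=
  have : Nonempty (Fin n) := Fin.pos_iff_nonempty.1 hn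
  (hh.2 x hx).2.ne_zero

theorem globallyMetric_iff_exact_general {n : ℕ} {m : WithTop ℕ∞} (hm : m ≠ 0)
    {U : Set (Fin n → ℝ)} (hU : IsOpen U) {Γ : (Fin n → ℝ) → Fin n → Fin n → Fin n → ℝ}
    {h : (Fin n → ℝ) → Matrix (Fin n) (Fin n) ℝ}
    (hd : ∀ i j, DifferentiableOn ℝ (fun x => h x i j) U) (hne : ∀ x ∈ U, 0 < n → h x ≠ 0)
    {Ψ : (Fin n → ℝ) → Fin n → ℝ}
    (hrec : ∀ x ∈ U, ∀ i j k, covDeriv Γ h k i j x = h x i j * Ψ x k) :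
    (∃ μ : (Fin n → ℝ) → ℝ, ContDiffOn ℝ m μ U ∧ (∀ x ∈ U, 0 < μ x) ∧
        ∀ x ∈ U, ∀ i j k, covDeriv Γ (fun z => (μ z)⁻¹ • h z) k i j x = 0) ↔
    (∃ f : (Fin n → ℝ) → ℝ, ContDiffOn ℝ m f U ∧ ∀ x ∈ U, ∀ k, Ψ x k = pd f k x) := by
  have parallel_iff {μ : (Fin n → ℝ) → ℝ} (hμ : ContDiffOn ℝ m μ U) {x : Fin n → ℝ} (hx : x ∈ U)
      (hμx : 0 < μ x) (k : Fin n) :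
      (∀ i j, covDeriv Γ (fun z => (μ z)⁻¹ • h z) k i j x = 0) ↔
        Ψ x k = pd (fun y => Real.log (μ y)) k x :=
    covDeriv_inv_smul_eq_zero_iff ((hμ.differentiableOn hm).differentiableAt (hU.mem_nhds hx))
      hμx.ne' (fun i j => (hd i j).differentiableAt (hU.mem_nhds hx)) (hne x hx k.pos)
      fun i j => hrec x hx i j k
  constructor
  · rintro ⟨μ, hμ, hpos, hpar⟩
    exact ⟨fun x => Real.log (μ x), hμ.log fun x hx => (hpos x hx).ne', fun x hx k =>
      (parallel_iff hμ hx (hpos x hx) k).1 fun i j => hpar x hx i j k⟩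
  · rintro ⟨f, hf, hΨ⟩
    refine ⟨fun x => Real.exp (f x), hf.exp, fun x _ => Real.exp_pos _, fun x hx i j k => ?_⟩
    exact (parallel_iff hf.exp hx (Real.exp_pos _) k).2 (by simpa using hΨ x hx k) i j

/-- **Proposition 3 and its Corollary**: for a smooth closed 1-form `Ψ` with `∇h = h ⊗ Ψ`
on an open connected set `U`, the connection is globally metric with a parallel metric
conformal to `h` if and only if `Ψ` is exact. -/
theorem globallyMetric_iff_exact {n : ℕ} (U : Set (Fin n → ℝ)) (hU : IsOpen U)
    (hUconn : IsConnected U)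
    (Γ : (Fin n → ℝ) → Fin n → Fin n → Fin n → ℝ) (hΓ : SmoothChristoffelOn Γ U)
    (h : (Fin n → ℝ) → Matrix (Fin n) (Fin n) ℝ) (hh : SmoothMetricOn h U)
    (Ψ : (Fin n → ℝ) → Fin n → ℝ)
    (hΨsmooth : ∀ k, ContDiffOn ℝ (⊤ : ℕ∞) (fun x => Ψ x k) U)
    (hΨclosed : ∀ x ∈ U, ∀ i j, pd (fun y => Ψ y j) i x = pd (fun y => Ψ y i) j x)
    (heq : ∀ x ∈ U, ∀ i j k, covDeriv Γ h k i j x = h x i j * Ψ x k) :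
    (∃ μ : (Fin n → ℝ) → ℝ, ContDiffOn ℝ (⊤ : ℕ∞) μ U ∧ (∀ x ∈ U, 0 < μ x) ∧
        ∀ x ∈ U, ∀ i j k, covDeriv Γ (fun z => (μ z)⁻¹ • h z) k i j x = 0) ↔
    (∃ f : (Fin n → ℝ) → ℝ, ContDiffOn ℝ (⊤ : ℕ∞) f U ∧
        ∀ x ∈ U, ∀ k, Ψ x k = pd f k x) := by
  exact globallyMetric_iff_exact_general (by simp) hU
    (fun i j => (hh.1 i j).differentiableOn (by simp)) (fun _ hx => hh.ne_zero hx) heq
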